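/- Let k be a perfect field of characteristic p > 0, let R and S be standard graded rings over k of Krull dimensions d ≥ 2 and d' ≥ 2 respectively, and let I ⊆ R and J ⊆ S be homogeneous ideals of finite colength. Let I ⊠ J denote the ideal of R ⊗_k S generated by the images of I and J under the inclusions r ↦ r⊗1 and s ↦ 1⊗s, and define f_n(R ⊗_k S, I ⊠ J)(x) = q^{1-(d+d')} · dim_k ((R ⊗_k S)/(I ⊠ J)^{[q]})_{⌊qx⌋} with q = p^n. Suppose f_n(R, I) converges uniformly on [0,∞) to a compactly supported continuous function f, f_n(S, J) converges uniformly to a compactly supported continuous function g, and f_n(R ⊗_k S, I ⊠ J) converges uniformly to a compactly supported continuous function h. Then, extending all functions by 0 to (-∞, 0], h(x) = (f*g)(x) = ∫_0^x f(y) g(x-y) dy for all x ∈ [0,∞). -/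

import Mathlib

/-! The Frobenius power `I^{[q]}`, `q = p ^ n`, is the extension of `I` along the iterated Frobenius
endomorphism. Hence it is homogeneous when `I` is, and it commutes with the formation of `I ⊠ J`
(`frobeniusPower_boxIdeal`). Since `(R ⊗ S) / (I ⊠ J) ≅ R/I ⊗ S/J` as graded algebras, the Hilbert
function of `(R ⊗ S) / (I ⊠ J)^{[q]}` is the discrete convolution of those of `R / I^{[q]}` and
`S / J^{[q]}` (`quotPieceDim_boxIdeal`). After normalization, with `m = ⌊q x⌋`,
`h_n(x) = (1 / q) * ∑_{i ≤ m} f_n(i / q) * g_n((m - i) / q)`.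
By uniform convergence and uniform continuity of the limits `f` and `g`, this is asymptotically a
Riemann sum for `∫_0^x f(y) g(x - y) dy` (`tendsto_discrete_convolution`). -/

open scoped TensorProduct
open Filter MeasureTheory

/-- The Frobenius power `I^{[q]}`: the ideal generated by `q`-th powers of elements of `I`. -/
noncomputable def frobeniusPower {A : Type*} [CommRing A] (I : Ideal A) (q : ℕ) : Ideal A :=
  Ideal.span ((fun a => a ^ q) '' (I : Set A))

/-- A grading `𝒜` on a commutative `k`-algebra `R` is standard if `𝒜 0 = k·1`, the degree-one
piece is finitely generated, and `𝒜 (m+1) = 𝒜 1 * 𝒜 m` for all `m`. -/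
structure IsStandardGraded (k : Type*) {R : Type*} [Field k] [CommRing R] [Algebra k R]
    (𝒜 : ℕ → Submodule k R) : Prop where
  degree_zero : 𝒜 0 = 1
  fg_one : (𝒜 1).FG
  succ_eq : ∀ m : ℕ, 𝒜 (m + 1) = 𝒜 1 * 𝒜 m

/-- `dim_k` of the degree piece `P` of the quotient by `I`: the dimension of the image of `P`
in `A ⧸ I`. -/
noncomputable def quotPieceDim (k : Type*) [Field k] {A : Type*} [CommRing A] [Algebra k A]
    (P : Submodule k A) (I : Ideal A) : ℕ :=
  Module.finrank k (P.map (Ideal.Quotient.mkₐ k I).toLinearMap)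

/-- The normalized Hilbert function of the pair `(A, I)` (with grading `P`, Krull dimension `d`
and Frobenius power `q`), extended by `0` to the negative reals:
`x ↦ q^{1-d} · dim_k (A/I^{[q]})_{⌊qx⌋}`. -/
noncomputable def normHilb (k : Type*) [Field k] {A : Type*} [CommRing A] [Algebra k A]
    (P : ℕ → Submodule k A) (I : Ideal A) (d q : ℕ) : ℝ → ℝ :=
  fun x => if x < 0 then 0 else
    (q : ℝ) ^ ((1 : ℤ) - (d : ℤ)) * quotPieceDim k (P ⌊(q : ℝ) * x⌋₊) (frobeniusPower I q)

/-- The degree-`m` piece of the tensor product grading on `R ⊗[k] S`: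
`(R ⊗ S)_m = Σ_{i=0}^m R_i ⊗ S_{m-i}`. -/
noncomputable def tensorPiece (k : Type*) [Field k] {R S : Type*} [CommRing R] [CommRing S]
    [Algebra k R] [Algebra k S] (𝒜 : ℕ → Submodule k R) (ℬ : ℕ → Submodule k S) (m : ℕ) :
    Submodule k (R ⊗[k] S) :=
  ⨆ i ∈ Finset.range (m + 1),
    (𝒜 i).map (Algebra.TensorProduct.includeLeft : R →ₐ[k] R ⊗[k] S).toLinearMap *
      (ℬ (m - i)).map (Algebra.TensorProduct.includeRight : S →ₐ[k] R ⊗[k] S).toLinearMap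

/-- `I ⊠ J`: the ideal of `R ⊗[k] S` generated by the images of `I` and `J` under the
canonical inclusions. -/
noncomputable def boxIdeal (k : Type*) [Field k] {R S : Type*} [CommRing R] [CommRing S]
    [Algebra k R] [Algebra k S] (I : Ideal R) (J : Ideal S) : Ideal (R ⊗[k] S) :=
  I.map (Algebra.TensorProduct.includeLeft : R →ₐ[k] R ⊗[k] S) ⊔
    J.map (Algebra.TensorProduct.includeRight : S →ₐ[k] R ⊗[k] S)

/-! ### Frobenius powers -/

/-- In characteristic `p` the Frobenius power is an extension of ideals along a ring
endomorphism, so that it may be computed on generators. -/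
lemma frobeniusPower_eq_map {A : Type*} [CommRing A] (p n : ℕ) [ExpChar A p] (I : Ideal A) :
    frobeniusPower I (p ^ n) = I.map (iterateFrobenius A p n) := by
  simp only [frobeniusPower, Ideal.map, ← iterateFrobenius_def]

lemma frobeniusPower_isHomogeneous {k : Type*} [Field k] {A : Type*} [CommRing A] [Algebra k A]
    (𝒜 : ℕ → Submodule k A) [GradedAlgebra 𝒜] (p n : ℕ) [ExpChar A p] {I : Ideal A}
    (hI : I.IsHomogeneous 𝒜) : (frobeniusPower I (p ^ n)).IsHomogeneous 𝒜 := by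
  obtain ⟨T, hT⟩ := (Ideal.IsHomogeneous.iff_exists 𝒜 I).1 hI
  rw [frobeniusPower_eq_map, hT, Ideal.map_span]
  apply Ideal.homogeneous_span
  rintro _ ⟨_, ⟨t, _, rfl⟩, rfl⟩
  rw [iterateFrobenius_def]
  exact (t ^ p ^ n).2

lemma frobeniusPower_map {A B : Type*} [CommRing A] [CommRing B] (p n : ℕ) [ExpChar A p]
    [ExpChar B p] (φ : A →+* B) (I : Ideal A) :
    (I.map φ).map (iterateFrobenius B p n) = (frobeniusPower I (p ^ n)).map φ := by
  rw [frobeniusPower_eq_map, Ideal.map_map, Ideal.map_map]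
  congr 1
  ext a
  simp [iterateFrobenius_def]

lemma frobeniusPower_boxIdeal {k : Type*} [Field k] {R S : Type*} [CommRing R] [CommRing S]
    [Algebra k R] [Algebra k S] (p n : ℕ) [ExpChar R p] [ExpChar S p] [ExpChar (R ⊗[k] S) p]
    (I : Ideal R) (J : Ideal S) :
    frobeniusPower (boxIdeal k I J) (p ^ n) =
      boxIdeal k (frobeniusPower I (p ^ n)) (frobeniusPower J (p ^ n)) := by
  rw [frobeniusPower_eq_map, boxIdeal, boxIdeal, Ideal.map_sup]
  exact congrArg₂ _ (frobeniusPower_map p n _ I) (frobeniusPower_map p n _ J)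

/-! ### Graded pieces of a tensor product of quotients -/

lemma finrank_map_of_injective {k : Type*} [Field k] {V W : Type*} [AddCommGroup V] [Module k V]
    [AddCommGroup W] [Module k W] (φ : V →ₗ[k] W) (hφ : Function.Injective φ)
    (P : Submodule k V) : Module.finrank k (P.map φ) = Module.finrank k P :=
  (Submodule.equivMapOfInjective φ hφ P).finrank_eq.symm

/-- The dimension of a piece of `A ⧸ I` may be computed in the target of any algebra map with
kernel `I`. -/
lemma quotPieceDim_eq_of_ker {k : Type*} [Field k] {A B : Type*} [CommRing A] [CommRing B]
    [Algebra k A] [Algebra k B] (φ : A →ₐ[k] B) (I : Ideal A) (hI : RingHom.ker φ = I)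
    (P : Submodule k A) :
    quotPieceDim k P I = Module.finrank k (P.map φ.toLinearMap) := by
  subst hI
  rw [quotPieceDim, ← finrank_map_of_injective (Ideal.kerLiftAlg φ).toLinearMap
    (Ideal.kerLiftAlg_injective φ), ← Submodule.map_comp]
  rfl

/-- A family of subspaces with linear maps that are the identity on one member and vanish on the
others is independent, so the dimension of its sum is the sum of the dimensions. -/
lemma finrank_iSup_of_proj {k : Type*} [Field k] {V : Type*} [AddCommGroup V] [Module k V]
    (W : ℕ → Submodule k V) [∀ i, FiniteDimensional k (W i)] (ρ : ℕ → V →ₗ[k] V) (m : ℕ)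
    (h1 : ∀ i ≤ m, ∀ v ∈ W i, ρ i v = v) (h0 : ∀ i ≤ m, ∀ j ≤ m, i ≠ j → ∀ v ∈ W j, ρ i v = 0) :
    Module.finrank k (⨆ i ∈ Finset.range (m + 1), W i : Submodule k V) =
      ∑ i ∈ Finset.range (m + 1), Module.finrank k (W i) := by
  have key : ∀ s : Finset ℕ, (∀ i ∈ s, i ≤ m) →
      Module.finrank k (⨆ i ∈ s, W i : Submodule k V) = ∑ i ∈ s, Module.finrank k (W i) := by
    intro s
    induction s using Finset.induction_on with
    | empty =>
      intro _
      have : (⨆ i ∈ (∅ : Finset ℕ), W i) = ⊥ := by simp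
      rw [this, finrank_bot, Finset.sum_empty]
    | insert a s ha ih =>
      intro hs
      have ham : a ≤ m := hs a (Finset.mem_insert_self _ _)
      have hsm : ∀ i ∈ s, i ≤ m := fun i hi => hs i (Finset.mem_insert_of_mem hi)
      have hfin : FiniteDimensional k (⨆ i ∈ s, W i : Submodule k V) :=
        Submodule.finiteDimensional_finset_sup s W |> fun h => by
          rwa [Finset.sup_eq_iSup] at h
      have hker : (⨆ i ∈ s, W i : Submodule k V) ≤ LinearMap.ker (ρ a) :=
        iSup₂_le fun j hj v hv => h0 a ham j (hsm j hj) (fun h => ha (h ▸ hj)) v hv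
      have hinf : W a ⊓ (⨆ i ∈ s, W i) = ⊥ := by
        rw [eq_bot_iff]
        rintro v ⟨hv, hv'⟩
        rw [Submodule.mem_bot, ← h1 a ham v hv]
        exact hker hv'
      have := Submodule.finrank_sup_add_finrank_inf_eq (W a) (⨆ i ∈ s, W i)
      rw [hinf, finrank_bot, add_zero] at this
      rw [Finset.iSup_insert, this, ih hsm, Finset.sum_insert ha]
  exact key _ fun i hi => Nat.lt_succ_iff.1 (Finset.mem_range.1 hi)

/-- The quotient of a graded algebra by a homogeneous ideal inherits the projections onto its
graded pieces. -/
lemma exists_quot_proj {k : Type*} [Field k] {A : Type*} [CommRing A] [Algebra k A]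
    (𝒜 : ℕ → Submodule k A) [GradedAlgebra 𝒜] {I : Ideal A} (hI : I.IsHomogeneous 𝒜) (i : ℕ) :
    ∃ ρ : (A ⧸ I) →ₗ[k] (A ⧸ I),
      (∀ v ∈ (𝒜 i).map (Ideal.Quotient.mkₐ k I).toLinearMap, ρ v = v) ∧
      ∀ j, i ≠ j → ∀ v ∈ (𝒜 j).map (Ideal.Quotient.mkₐ k I).toLinearMap, ρ v = 0 := by
  obtain ⟨s, hs⟩ := LinearMap.exists_rightInverse_of_surjective
    (Ideal.Quotient.mkₐ k I).toLinearMap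
    (LinearMap.range_eq_top.2 (Ideal.Quotient.mkₐ_surjective k I))
  have hρ : ∀ r : A, Ideal.Quotient.mk I (GradedAlgebra.proj 𝒜 i (s (Ideal.Quotient.mk I r))) =
      Ideal.Quotient.mk I (GradedAlgebra.proj 𝒜 i r) := by
    intro r
    rw [Ideal.Quotient.eq, ← map_sub]
    apply hI i
    rw [← Ideal.Quotient.eq]
    exact LinearMap.congr_fun hs (Ideal.Quotient.mk I r)
  refine ⟨(Ideal.Quotient.mkₐ k I).toLinearMap ∘ₗ GradedAlgebra.proj 𝒜 i ∘ₗ s, ?_, ?_⟩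
  · rintro _ ⟨r, hr, rfl⟩
    refine (hρ r).trans ?_
    rw [GradedAlgebra.proj_apply, DirectSum.decompose_of_mem_same 𝒜 hr]
    rfl
  · rintro j hij _ ⟨r, hr, rfl⟩
    refine (hρ r).trans ?_
    rw [GradedAlgebra.proj_apply, DirectSum.decompose_of_mem_ne 𝒜 hr hij.symm, map_zero]

lemma IsStandardGraded.finiteDimensional {k : Type*} [Field k] {A : Type*} [CommRing A]
    [Algebra k A] {𝒜 : ℕ → Submodule k A} (h : IsStandardGraded k 𝒜) (m : ℕ) :
    FiniteDimensional k (𝒜 m) := by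
  apply Module.Finite.iff_fg.2
  induction m with
  | zero => rw [h.degree_zero, Submodule.one_eq_span]; exact Submodule.fg_span_singleton 1
  | succ m ih => rw [h.succ_eq]; exact h.fg_one.mul ih

/-- The product, inside `A ⊗ B`, of subspaces `P ⊆ A` and `Q ⊆ B` is the image of `P ⊗ Q`. -/
lemma map_include_mul_eq_range {k : Type*} [Field k] {A B : Type*} [CommRing A] [CommRing B]
    [Algebra k A] [Algebra k B] (P : Submodule k A) (Q : Submodule k B) :
    P.map (Algebra.TensorProduct.includeLeft : A →ₐ[k] A ⊗[k] B).toLinearMap *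
      Q.map (Algebra.TensorProduct.includeRight : B →ₐ[k] A ⊗[k] B).toLinearMap =
    LinearMap.range (TensorProduct.map P.subtype Q.subtype) := by
  rw [TensorProduct.range_map, Submodule.range_subtype, Submodule.range_subtype]
  apply le_antisymm
  · rw [Submodule.mul_le]
    rintro _ ⟨a, ha, rfl⟩ _ ⟨b, hb, rfl⟩
    have : (a ⊗ₜ[k] b : A ⊗[k] B) ∈ Submodule.map₂ (TensorProduct.mk k A B) P Q :=
      Submodule.apply_mem_map₂ _ ha hb
    simpa using this
  · rw [Submodule.map₂_le]
    intro a ha b hb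
    have := Submodule.mul_mem_mul
      (Submodule.mem_map_of_mem (f := (Algebra.TensorProduct.includeLeft : A →ₐ[k] A ⊗[k] B).toLinearMap) ha)
      (Submodule.mem_map_of_mem (f := (Algebra.TensorProduct.includeRight : B →ₐ[k] A ⊗[k] B).toLinearMap) hb)
    simpa using this

lemma finrank_range_map_subtype {k : Type*} [Field k] {A B : Type*} [CommRing A] [CommRing B]
    [Algebra k A] [Algebra k B] (P : Submodule k A) (Q : Submodule k B) :
    Module.finrank k (LinearMap.range (TensorProduct.map P.subtype Q.subtype)) =
      Module.finrank k P * Module.finrank k Q := by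
  rw [LinearMap.finrank_range_of_inj (TensorProduct.map_injective_of_flat_flat _ _
    P.injective_subtype Q.injective_subtype), Module.finrank_tensorProduct]

/-- The Hilbert function of `(R ⊗ S) / (I ⊠ J) ≅ R/I ⊗ S/J` is the discrete convolution of the
Hilbert functions of `R/I` and `S/J`. -/
lemma quotPieceDim_boxIdeal {k : Type*} [Field k] {R S : Type*} [CommRing R] [CommRing S]
    [Algebra k R] [Algebra k S]
    (𝒜 : ℕ → Submodule k R) (ℬ : ℕ → Submodule k S) [GradedAlgebra 𝒜] [GradedAlgebra ℬ]
    (hR : IsStandardGraded k 𝒜) (hS : IsStandardGraded k ℬ) {I : Ideal R} {J : Ideal S}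
    (hI : I.IsHomogeneous 𝒜) (m : ℕ) :
    quotPieceDim k (tensorPiece k 𝒜 ℬ m) (boxIdeal k I J) =
      ∑ i ∈ Finset.range (m + 1), quotPieceDim k (𝒜 i) I * quotPieceDim k (ℬ (m - i)) J := by
  set A : ℕ → Submodule k (R ⧸ I) := fun i => (𝒜 i).map (Ideal.Quotient.mkₐ k I).toLinearMap
    with hA
  set B : ℕ → Submodule k (S ⧸ J) := fun i => (ℬ i).map (Ideal.Quotient.mkₐ k J).toLinearMap
    with hB
  have hker : RingHom.ker (Algebra.TensorProduct.map (Ideal.Quotient.mkₐ k I)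
      (Ideal.Quotient.mkₐ k J)) = boxIdeal k I J := by
    have hkI : RingHom.ker (Ideal.Quotient.mkₐ k I) = I := Ideal.mk_ker
    have hkJ : RingHom.ker (Ideal.Quotient.mkₐ k J) = J := Ideal.mk_ker
    rw [Algebra.TensorProduct.map_ker _ _ (Ideal.Quotient.mkₐ_surjective k I)
      (Ideal.Quotient.mkₐ_surjective k J), hkI, hkJ, boxIdeal]
  have hpiece : (tensorPiece k 𝒜 ℬ m).map (Algebra.TensorProduct.map (Ideal.Quotient.mkₐ k I)
      (Ideal.Quotient.mkₐ k J)).toLinearMap = ⨆ i ∈ Finset.range (m + 1),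
        LinearMap.range (TensorProduct.map (A i).subtype (B (m - i)).subtype) := by
    simp only [tensorPiece, Submodule.map_iSup, Submodule.map_mul]
    refine iSup_congr fun i => iSup_congr fun _ => ?_
    rw [← map_include_mul_eq_range, hA, hB]
    simp only [← Submodule.map_comp]
    congr 2
  have hfA : ∀ i, FiniteDimensional k (A i) := fun i =>
    haveI := hR.finiteDimensional i
    inferInstanceAs (FiniteDimensional k ((𝒜 i).map _))
  have hfB : ∀ i, FiniteDimensional k (B i) := fun i =>
    haveI := hS.finiteDimensional i
    inferInstanceAs (FiniteDimensional k ((ℬ i).map _))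
  choose ρ hρ1 hρ0 using exists_quot_proj 𝒜 hI
  rw [quotPieceDim_eq_of_ker _ _ hker, hpiece,
    finrank_iSup_of_proj _ (fun i => TensorProduct.map (ρ i) LinearMap.id) m]
  · exact Finset.sum_congr rfl fun i _ => finrank_range_map_subtype _ _
  · rintro i - _ ⟨t, rfl⟩
    rw [← LinearMap.comp_apply, ← TensorProduct.map_comp, LinearMap.id_comp]
    congr 2
    ext a
    exact hρ1 i _ a.2
  · rintro i - j - hij _ ⟨t, rfl⟩
    have : ρ i ∘ₗ (A j).subtype = 0 := by
      ext a
      exact hρ0 i j hij _ a.2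
    rw [← LinearMap.comp_apply, ← TensorProduct.map_comp, this, TensorProduct.map_zero_left,
      LinearMap.zero_apply]

/-! ### Riemann sums of a convolution -/

/-- Discrete convolutions of functions sampled at `i / q`, normalized by `1 / q`, converge to the
convolution of the uniform limits as `q → ∞`. -/
lemma tendsto_discrete_convolution {f g : ℝ → ℝ} (hfc : Continuous f) (hfsupp : HasCompactSupport f)
    (hgc : Continuous g) (hgsupp : HasCompactSupport g) (hg0 : ∀ x : ℝ, x < 0 → g x = 0)
    {F G : ℕ → ℝ → ℝ} (hF : TendstoUniformlyOn F f atTop (Set.Ici 0))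
    (hG : TendstoUniformlyOn G g atTop (Set.Ici 0))
    (Q : ℕ → ℕ) (hQ : Tendsto Q atTop atTop) {x : ℝ} (hx : 0 ≤ x) :
    Tendsto (fun n => (Q n : ℝ)⁻¹ * ∑ i ∈ Finset.range (⌊(Q n : ℝ) * x⌋₊ + 1),
      F n (i / Q n) * G n ((⌊(Q n : ℝ) * x⌋₊ - i : ℕ) / Q n)) atTop
      (nhds (∫ y in (0 : ℝ)..x, f y * g (x - y))) := by
  obtain ⟨C₁, hC₁⟩ := hfsupp.exists_bound_of_continuous hfc
  obtain ⟨C₂, hC₂⟩ := hgsupp.exists_bound_of_continuous hgc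
  set C := max C₁ C₂
  have hfC : ∀ y, |f y| ≤ C := fun y => (hC₁ y).trans (le_max_left _ _)
  have hgC : ∀ y, |g y| ≤ C := fun y => (hC₂ y).trans (le_max_right _ _)
  have hC0 : 0 ≤ C := (abs_nonneg _).trans (hfC 0)
  rw [Metric.tendsto_nhds]
  intro ε hε
  -- With both factors approximated to within `η ≤ 1`, each product is off by at most
  -- `(2 * C + 1) * η`, over a total length of at most `x + 1`.
  obtain ⟨η, hη0, hη1, hηε⟩ : ∃ η : ℝ, 0 < η ∧ η ≤ 1 ∧ (2 * C + 1) * η * (x + 1) < ε := by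
    have hD : 0 < (2 * C + 1) * (x + 1) := by positivity
    refine ⟨min 1 (ε / (2 * ((2 * C + 1) * (x + 1)))), by positivity, min_le_left _ _, ?_⟩
    calc (2 * C + 1) * min 1 (ε / (2 * ((2 * C + 1) * (x + 1)))) * (x + 1)
        = ((2 * C + 1) * (x + 1)) * min 1 (ε / (2 * ((2 * C + 1) * (x + 1)))) := by ring
      _ ≤ ((2 * C + 1) * (x + 1)) * (ε / (2 * ((2 * C + 1) * (x + 1)))) := by
          gcongr; exact min_le_right _ _
      _ = ε / 2 := by field_simp
      _ < ε := by linarith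
  obtain ⟨δ₁, hδ₁, hfδ⟩ := Metric.uniformContinuous_iff.1
    (hfsupp.uniformContinuous_of_continuous hfc) (η / 2) (by positivity)
  obtain ⟨δ₂, hδ₂, hgδ⟩ := Metric.uniformContinuous_iff.1
    (hgsupp.uniformContinuous_of_continuous hgc) (η / 2) (by positivity)
  have hδ : 0 < min δ₁ δ₂ := lt_min hδ₁ hδ₂
  have hQ' : Tendsto (fun n => (Q n : ℝ)) atTop atTop := tendsto_natCast_atTop_atTop.comp hQ
  filter_upwards [Metric.tendstoUniformlyOn_iff.1 hF (η / 2) (by positivity),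
    Metric.tendstoUniformlyOn_iff.1 hG (η / 2) (by positivity),
    hQ'.eventually_ge_atTop 1, hQ'.eventually_gt_atTop (2 / min δ₁ δ₂)] with n hFn hGn hq1 hqδ
  generalize hqn : (Q n : ℝ) = q at *
  have hq0 : 0 < q := by linarith
  set m := ⌊q * x⌋₊ with hm
  have hmle : (m : ℝ) ≤ q * x := Nat.floor_le (by positivity)
  have hmlt : q * x < m + 1 := Nat.lt_floor_add_one _
  have h2q : 2 / q < min δ₁ δ₂ := by
    rw [div_lt_iff₀ hδ] at hqδ
    rw [div_lt_iff₀ hq0]; linarith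
  have hψc : Continuous fun y => f y * g (x - y) := by fun_prop
  -- The integrand vanishes beyond `x`, so the range may be rounded up to `(m + 1) / q`.
  have hxm : x ≤ ((m + 1 : ℕ) : ℝ) / q := by
    rw [le_div_iff₀ hq0]; push_cast; linarith
  have hint : ∫ y in (0 : ℝ)..x, f y * g (x - y) =
      ∑ i ∈ Finset.range (m + 1), ∫ y in (i / q : ℝ)..((i + 1 : ℕ) / q), f y * g (x - y) := by
    rw [intervalIntegral.sum_integral_adjacent_intervals (a := fun i : ℕ => (i : ℝ) / q)
      (fun i _ => hψc.intervalIntegrable _ _), Nat.cast_zero, zero_div,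
      ← intervalIntegral.integral_add_adjacent_intervals (b := x) (hψc.intervalIntegrable 0 x)
        (hψc.intervalIntegrable x (((m + 1 : ℕ) : ℝ) / q))]
    have : ∫ y in x..((m + 1 : ℕ) / q : ℝ), f y * g (x - y) = 0 := by
      apply intervalIntegral.integral_zero_ae
      refine Eventually.of_forall fun y hy => ?_
      rw [Set.uIoc_of_le hxm] at hy
      rw [hg0 _ (by linarith [hy.1]), mul_zero]
    rw [this, add_zero]
  have hterm : ∀ i ∈ Finset.range (m + 1),
      |q⁻¹ * (F n (i / q) * G n ((m - i : ℕ) / q)) -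
        ∫ y in (i / q : ℝ)..((i + 1 : ℕ) / q), f y * g (x - y)| ≤ (2 * C + 1) * η * q⁻¹ := by
    intro i hi
    have him : i ≤ m := Nat.lt_succ_iff.1 (Finset.mem_range.1 hi)
    have hlen : ((i + 1 : ℕ) : ℝ) / q - i / q = q⁻¹ := by push_cast; field_simp; ring
    have hle : (i : ℝ) / q ≤ (i + 1 : ℕ) / q := by
      have : 0 < q⁻¹ := by positivity
      linarith
    set a := F n (i / q)
    set b := G n ((m - i : ℕ) / q)
    have hconst : q⁻¹ * (a * b) = ∫ _ in (i / q : ℝ)..((i + 1 : ℕ) / q), a * b := by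
      rw [intervalIntegral.integral_const, hlen, smul_eq_mul]
    rw [hconst, ← intervalIntegral.integral_sub (intervalIntegrable_const)
      (hψc.intervalIntegrable _ _)]
    rw [← Real.norm_eq_abs]
    refine (intervalIntegral.norm_integral_le_of_norm_le_const (C := (2 * C + 1) * η) ?_).trans ?_
    · intro y hy
      rw [Set.uIoc_of_le hle] at hy
      have hy1 : (i : ℝ) < y * q := (div_lt_iff₀ hq0).1 hy.1
      have hy2 : y * q ≤ i + 1 := by
        have := (le_div_iff₀ hq0).1 hy.2
        push_cast at this; exact this
      have hFa : |a - f y| ≤ η := by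
        have e1 := hFn (i / q) (Set.mem_Ici.2 (by positivity))
        have e2 : dist ((i : ℝ) / q) y < δ₁ := by
          refine lt_of_le_of_lt ?_ (h2q.trans_le (min_le_left _ _))
          rw [Real.dist_eq, le_div_iff₀ hq0, ← abs_of_pos hq0, ← abs_mul, abs_of_pos hq0, sub_mul,
            div_mul_cancel₀ _ hq0.ne', abs_le]
          constructor <;> linarith
        have e3 := hfδ e2
        rw [Real.dist_eq, abs_lt] at e1 e3
        rw [abs_le]
        constructor <;> linarith [e1.1, e1.2, e3.1, e3.2]
      have hGb : |b - g (x - y)| ≤ η := by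
        have e1 := hGn ((m - i : ℕ) / q) (Set.mem_Ici.2 (by positivity))
        have e2 : dist (((m - i : ℕ) : ℝ) / q) (x - y) < δ₂ := by
          refine lt_of_le_of_lt ?_ (h2q.trans_le (min_le_right _ _))
          rw [Real.dist_eq, le_div_iff₀ hq0, ← abs_of_pos hq0, ← abs_mul, abs_of_pos hq0, sub_mul,
            div_mul_cancel₀ _ hq0.ne', Nat.cast_sub him, abs_le]
          constructor <;> linarith
        have e3 := hgδ e2
        rw [Real.dist_eq, abs_lt] at e1 e3
        rw [abs_le]
        constructor <;> linarith [e1.1, e1.2, e3.1, e3.2]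
      have hb : |b| ≤ C + 1 := by
        have := abs_add_le (b - g (x - y)) (g (x - y))
        rw [sub_add_cancel] at this
        linarith [hgC (x - y)]
      calc ‖a * b - f y * g (x - y)‖ = |(a - f y) * b + f y * (b - g (x - y))| := by
            rw [Real.norm_eq_abs]; congr 1; ring
        _ ≤ |a - f y| * |b| + |f y| * |b - g (x - y)| := by
            rw [← abs_mul, ← abs_mul]; exact abs_add_le _ _
        _ ≤ η * (C + 1) + C * η := by
            gcongr
            exact hfC y
        _ = (2 * C + 1) * η := by ring
    · rw [hlen, abs_of_pos (by positivity)]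
  rw [Real.dist_eq, hint, Finset.mul_sum, ← Finset.sum_sub_distrib]
  refine (Finset.abs_sum_le_sum_abs _ _).trans_lt ((Finset.sum_le_sum hterm).trans_lt ?_)
  rw [Finset.sum_const, Finset.card_range, nsmul_eq_mul]
  refine lt_of_le_of_lt ?_ hηε
  have : ((m + 1 : ℕ) : ℝ) * q⁻¹ ≤ x + 1 := by
    rw [← div_eq_mul_inv, div_le_iff₀ hq0]; push_cast; linarith
  calc ((m + 1 : ℕ) : ℝ) * ((2 * C + 1) * η * q⁻¹)
      = (2 * C + 1) * η * (((m + 1 : ℕ) : ℝ) * q⁻¹) := by ring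
    _ ≤ _ := by gcongr

/-- When both factors vanish on the negative half-line, the convolution integral over `ℝ` reduces
to one over `[0, x]`. -/
lemma integral_mul_sub_eq_intervalIntegral {f g : ℝ → ℝ} (hfc : Continuous f)
    (hf0 : ∀ x : ℝ, x < 0 → f x = 0) (hg0 : ∀ x : ℝ, x < 0 → g x = 0) {x : ℝ} (hx : 0 ≤ x) :
    ∫ y : ℝ, f y * g (x - y) = ∫ y in (0 : ℝ)..x, f y * g (x - y) := by
  -- Continuity extends the vanishing of `f` to the endpoint `0`.
  have hf0' : ∀ y ≤ 0, f y = 0 := by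
    have hcl : Set.Iic (0 : ℝ) ⊆ {y | f y = 0} := by
      rw [← closure_Iio]
      exact closure_minimal (fun y hy => hf0 y hy) (isClosed_eq hfc continuous_const)
    exact fun y hy => hcl hy
  rw [intervalIntegral.integral_of_le hx, setIntegral_eq_integral_of_forall_compl_eq_zero]
  intro y hy
  rcases le_or_gt y 0 with h | h
  · rw [hf0' y h, zero_mul]
  · have : x < y := by
      by_contra hxy
      exact hy ⟨h, not_lt.1 hxy⟩
    rw [hg0 _ (by linarith), mul_zero]

/-! ### The convolution formula -/

lemma normHilb_div {k : Type*} [Field k] {A : Type*} [CommRing A] [Algebra k A]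
    (P : ℕ → Submodule k A) (I : Ideal A) (d : ℕ) {q : ℕ} (hq : q ≠ 0) (i : ℕ) :
    normHilb k P I d q ((i : ℝ) / q) =
      (q : ℝ) ^ ((1 : ℤ) - (d : ℤ)) * quotPieceDim k (P i) (frobeniusPower I q) := by
  have hq' : (q : ℝ) ≠ 0 := Nat.cast_ne_zero.2 hq
  rw [normHilb, if_neg (not_lt.2 (by positivity)), mul_div_cancel₀ _ hq', Nat.floor_natCast]

/-- **Theorem (binary case)**: For standard graded rings `R, S` of Krull dimensions
`d, d' ≥ 2` over a perfect field `k` of characteristic `p > 0` and homogeneous ideals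
`I ⊆ R`, `J ⊆ S` of finite colength, if the normalized Hilbert functions of `(R, I)`,
`(S, J)` and `(R ⊗_k S, I ⊠ J)` converge uniformly on `[0, ∞)` to compactly supported
continuous functions `f`, `g` and `h` (all extended by `0` to `(-∞, 0]`), then
`h(x) = (f*g)(x) = ∫_0^x f(y) g(x−y) dy` for all `x ∈ [0, ∞)`. -/
theorem hkDensity_tensor_eq_conv {k : Type*} [Field k] [PerfectField k] {p : ℕ}
    (hp : p.Prime) [CharP k p] {R S : Type*} [CommRing R] [CommRing S]
    [Algebra k R] [Algebra k S]
    (𝒜 : ℕ → Submodule k R) (ℬ : ℕ → Submodule k S) [GradedAlgebra 𝒜] [GradedAlgebra ℬ]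
    (hstdR : IsStandardGraded k 𝒜) (hstdS : IsStandardGraded k ℬ)
    (d d' : ℕ) (hd : 2 ≤ d) (hd' : 2 ≤ d')
    (hdimR : ringKrullDim R = d) (hdimS : ringKrullDim S = d')
    (I : Ideal R) (J : Ideal S)
    (hIhom : Ideal.IsHomogeneous 𝒜 I) (hJhom : Ideal.IsHomogeneous ℬ J)
    (hIcol : FiniteDimensional k (R ⧸ I)) (hJcol : FiniteDimensional k (S ⧸ J))
    (f g h : ℝ → ℝ)
    (hfc : Continuous f) (hfsupp : HasCompactSupport f) (hf0 : ∀ x : ℝ, x < 0 → f x = 0)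
    (hgc : Continuous g) (hgsupp : HasCompactSupport g) (hg0 : ∀ x : ℝ, x < 0 → g x = 0)
    (hhc : Continuous h) (hhsupp : HasCompactSupport h) (hh0 : ∀ x : ℝ, x < 0 → h x = 0)
    (hfu : TendstoUniformlyOn (fun n => normHilb k 𝒜 I d (p ^ n)) f atTop (Set.Ici 0))
    (hgu : TendstoUniformlyOn (fun n => normHilb k ℬ J d' (p ^ n)) g atTop (Set.Ici 0))
    (hhu : TendstoUniformlyOn
      (fun n => normHilb k (tensorPiece k 𝒜 ℬ) (boxIdeal k I J) (d + d') (p ^ n))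
      h atTop (Set.Ici 0)) :
    ∀ x : ℝ, 0 ≤ x →
      h x = (∫ y : ℝ, f y * g (x - y)) ∧ h x = ∫ y in (0 : ℝ)..x, f y * g (x - y) := by
  intro x hx
  have : Fact p.Prime := ⟨hp⟩
  have hnR : Nontrivial R := by
    rw [← not_subsingleton_iff_nontrivial]
    intro hs
    rw [ringKrullDim_eq_bot_of_subsingleton] at hdimR
    exact absurd hdimR (WithBot.bot_ne_coe (a := (d : ℕ∞)))
  have hnS : Nontrivial S := by
    rw [← not_subsingleton_iff_nontrivial]
    intro hs
    rw [ringKrullDim_eq_bot_of_subsingleton] at hdimS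
    exact absurd hdimS (WithBot.bot_ne_coe (a := (d' : ℕ∞)))
  have : ExpChar k p := expChar_of_injective_ringHom (RingHom.id k).injective p
  have : ExpChar R p := expChar_of_injective_algebraMap (algebraMap k R).injective p
  have : ExpChar S p := expChar_of_injective_algebraMap (algebraMap k S).injective p
  have : ExpChar (R ⊗[k] S) p :=
    expChar_of_injective_algebraMap (algebraMap k (R ⊗[k] S)).injective p
  have hlim := tendsto_discrete_convolution hfc hfsupp hgc hgsupp hg0 hfu hgu (fun n => p ^ n)
    (tendsto_pow_atTop_atTop_of_one_lt hp.one_lt) hx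
  have hconv : h x = ∫ y in (0 : ℝ)..x, f y * g (x - y) := by
    refine tendsto_nhds_unique ((hhu.tendsto_at (Set.mem_Ici.2 hx)).congr fun n => ?_) hlim
    have hq : p ^ n ≠ 0 := pow_ne_zero n hp.ne_zero
    have hq' : ((p ^ n : ℕ) : ℝ) ≠ 0 := Nat.cast_ne_zero.2 hq
    simp only [normHilb_div _ _ _ hq]
    rw [normHilb, if_neg hx.not_gt, frobeniusPower_boxIdeal,
      quotPieceDim_boxIdeal 𝒜 ℬ hstdR hstdS (frobeniusPower_isHomogeneous 𝒜 p n hIhom)]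
    push_cast
    rw [Finset.mul_sum, Finset.mul_sum]
    refine Finset.sum_congr rfl fun i _ => ?_
    -- The normalizations match: `1 - (d + d') = -1 + (1 - d) + (1 - d')`.
    have hexp : ((p : ℝ) ^ n) ^ ((1 : ℤ) - ((d : ℤ) + (d' : ℤ))) =
        ((p : ℝ) ^ n)⁻¹ * (((p : ℝ) ^ n) ^ ((1 : ℤ) - (d : ℤ)) *
          ((p : ℝ) ^ n) ^ ((1 : ℤ) - (d' : ℤ))) := by
      rw [Nat.cast_pow] at hq'
      rw [← zpow_neg_one, ← zpow_add₀ hq', ← zpow_add₀ hq']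
      congr 1
      ring
    rw [hexp]
    ring
  exact ⟨hconv.trans (integral_mul_sub_eq_intervalIntegral hfc hf0 hg0 hx).symm, hconv⟩
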